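/- There exists a constant C > 0 such that for every x ≥ 1, |J₀′(x) + √(2/π) · sin(x − π/4)/√x| ≤ C x^{−3/2}, where J₀′ is the derivative of J₀. -/

import Mathlib

/-- The Bessel function of order zero, defined by its power series. -/
noncomputable def J0 (x : ℝ) : ℝ :=
  ∑' j : ℕ, ((-1 : ℝ) ^ j / ((Nat.factorial j : ℝ)) ^ 2) * (x / 2) ^ (2 * j)

/-!
Summing the power series against Wallis' integrals gives `J₀(x) = (2/π) ∫ cos (x cos θ) dθ` over
`[0, π/2]`; differentiating, integrating by parts and substituting `t = cos θ` yields Poisson's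
formula `J₀′(x) = -(2x/π) ∫₀¹ √(1 - t²) cos (xt) dt`. By Cauchy's theorem on the half-strip above
`[0, 1]`, the integral of `√(1 - z²) e^{ixz}` moves to the two vertical rays, where it decays
exponentially. The integrand is real on the ray from `0`, so that ray contributes nothing to the
real part; on the ray from `1` it equals `e^{i(x - π/4)} √τ e^{-xτ} √(2 + iτ)`, and Watson's
lemma applies: replacing `√(2 + iτ)` by `√2`, at a cost of `O(τ)`, leaves Gamma integrals.
-/

open Set Filter MeasureTheory
open scoped Real Topology Interval

theorem prod_range_odd_div_even (n : ℕ) :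
    ∏ i ∈ Finset.range n, (2 * (i : ℝ) + 1) / (2 * i + 2) =
      (2 * n).factorial / (4 ^ n * (n.factorial : ℝ) ^ 2) := by
  induction n with
  | zero => simp
  | succ n ih =>
    rw [Finset.prod_range_succ, ih, show 2 * (n + 1) = 2 * n + 1 + 1 by ring]
    simp only [Nat.factorial_succ]
    push_cast
    field_simp
    ring

theorem integral_cos_pow_even (n : ℕ) :
    ∫ θ in (0 : ℝ)..π / 2, Real.cos θ ^ (2 * n) =
      π / 2 * ((2 * n).factorial / (4 ^ n * (n.factorial : ℝ) ^ 2)) := by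
  rw [EulerSine.integral_cos_pow_eq, integral_sin_pow_even, prod_range_odd_div_even]
  ring

theorem J0_eq_integral_cos_mul_cos (x : ℝ) :
    J0 x = 2 / π * ∫ θ in (0 : ℝ)..π / 2, Real.cos (x * Real.cos θ) := by
  have hasSum_integral := intervalIntegral.hasSum_integral_of_dominated_convergence
    (μ := volume) (a := 0) (b := π / 2)
    (F := fun (n : ℕ) θ => (-1) ^ n * (x * Real.cos θ) ^ (2 * n) / (2 * n).factorial)
    (f := fun θ => Real.cos (x * Real.cos θ))
    (fun (n : ℕ) _ => |x| ^ (2 * n) / ((2 * n).factorial : ℝ))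
    (fun n => by apply Continuous.aestronglyMeasurable; fun_prop)
    (fun n => .of_forall fun θ _ => by
      simp only [norm_div, norm_mul, norm_pow, norm_neg, norm_one, one_pow, one_mul,
        Real.norm_eq_abs, Nat.abs_cast]
      gcongr
      exact mul_le_of_le_one_right (abs_nonneg _) (Real.abs_cos_le_one _))
    (.of_forall fun _ _ => (Real.hasSum_cosh |x|).summable)
    (by simp)
    (.of_forall fun _ _ => Real.hasSum_cos _)
  rw [← hasSum_integral.tsum_eq, J0, ← tsum_mul_left]
  refine tsum_congr fun n => ?_
  have factor_out (θ : ℝ) : (-1) ^ n * (x * Real.cos θ) ^ (2 * n) / (2 * n).factorial =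
      (-1) ^ n * x ^ (2 * n) / (2 * n).factorial * Real.cos θ ^ (2 * n) := by
    rw [mul_pow]
    ring
  simp only [factor_out, intervalIntegral.integral_const_mul, integral_cos_pow_even]
  rw [div_pow, pow_mul 2 2 n, show (2 : ℝ) ^ 2 = 4 by norm_num]
  field_simp

theorem hasDerivAt_integral_cos_mul_cos (x : ℝ) :
    HasDerivAt (fun x => ∫ θ in (0 : ℝ)..π / 2, Real.cos (x * Real.cos θ))
      (-∫ θ in (0 : ℝ)..π / 2, Real.sin (x * Real.cos θ) * Real.cos θ) x := by
  have h := intervalIntegral.hasDerivAt_integral_of_dominated_loc_of_deriv_le (μ := volume)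
    (a := 0) (b := π / 2) (F := fun x θ => Real.cos (x * Real.cos θ))
    (F' := fun x θ => -(Real.sin (x * Real.cos θ) * Real.cos θ)) (x₀ := x)
    (bound := fun _ => 1) univ_mem
    (.of_forall fun _ => (by fun_prop : Continuous _).aestronglyMeasurable)
    ((by fun_prop : Continuous _).intervalIntegrable _ _)
    (by fun_prop : Continuous _).aestronglyMeasurable
    (.of_forall fun _ _ _ _ => by
      rw [norm_neg, norm_mul]
      exact mul_le_one₀ (Real.abs_sin_le_one _) (norm_nonneg _) (Real.abs_cos_le_one _))
    (by simp)
    (.of_forall fun θ _ y _ => by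
      simpa using ((hasDerivAt_id y).mul_const (Real.cos θ)).cos)
  simpa only [intervalIntegral.integral_neg] using h.2

theorem integral_sin_mul_cos_mul_cos (x : ℝ) :
    ∫ θ in (0 : ℝ)..π / 2, Real.sin (x * Real.cos θ) * Real.cos θ =
      x * ∫ θ in (0 : ℝ)..π / 2, Real.cos (x * Real.cos θ) * Real.sin θ ^ 2 := by
  have by_parts := intervalIntegral.integral_mul_deriv_eq_deriv_mul (a := 0) (b := π / 2)
    (u := fun θ => Real.sin (x * Real.cos θ)) (v := Real.sin)
    (fun θ _ => ((Real.hasDerivAt_cos θ).const_mul x).sin) (fun θ _ => Real.hasDerivAt_sin θ)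
    ((by fun_prop : Continuous _).intervalIntegrable _ _)
    (Real.continuous_cos.intervalIntegrable _ _)
  rw [by_parts, ← intervalIntegral.integral_const_mul]
  simp only [Real.cos_pi_div_two, mul_zero, Real.sin_zero, zero_mul, sub_self, zero_sub]
  rw [← intervalIntegral.integral_neg]
  exact intervalIntegral.integral_congr fun θ _ => by ring

theorem integral_comp_cos_mul_sin_sq {g : ℝ → ℝ} {a b : ℝ} (ha : a ∈ Icc 0 π)
    (hb : b ∈ Icc 0 π) (hg : ContinuousOn g (Real.cos '' [[a, b]])) :
    ∫ θ in a..b, g (Real.cos θ) * Real.sin θ ^ 2 =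
      ∫ t in Real.cos b..Real.cos a, √(1 - t ^ 2) * g t := by
  have sqrt_eq_sin {θ : ℝ} (hθ : θ ∈ [[a, b]]) : √(1 - Real.cos θ ^ 2) = Real.sin θ := by
    rw [← abs_of_nonneg (Real.sin_nonneg_of_mem_Icc (uIcc_subset_Icc ha hb hθ)),
      Real.abs_sin_eq_sqrt_one_sub_cos_sq]
  have substitution := intervalIntegral.integral_comp_mul_deriv'' (a := a) (b := b)
    (g := fun t => √(1 - t ^ 2) * g t) Real.continuousOn_cos
    (fun θ _ => (Real.hasDerivAt_cos θ).hasDerivWithinAt) (by fun_prop)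
    (ContinuousOn.mul (by fun_prop) hg)
  rw [intervalIntegral.integral_symm (Real.cos a), ← substitution, ← intervalIntegral.integral_neg]
  refine intervalIntegral.integral_congr fun θ hθ => ?_
  simp only [Function.comp_apply, sqrt_eq_sin hθ]
  ring

theorem deriv_J0_eq_integral_cos_mul_sqrt (x : ℝ) :
    deriv J0 x = -(2 * x / π) * ∫ t in (0 : ℝ)..1, √(1 - t ^ 2) * Real.cos (x * t) := by
  rw [funext J0_eq_integral_cos_mul_cos,
    ((hasDerivAt_integral_cos_mul_cos x).const_mul (2 / π)).deriv, integral_sin_mul_cos_mul_cos,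
    integral_comp_cos_mul_sin_sq (g := fun t => Real.cos (x * t))
      ⟨le_rfl, Real.pi_nonneg⟩ ⟨by positivity, half_le_self Real.pi_nonneg⟩ (by fun_prop),
    Real.cos_zero, Real.cos_pi_div_two]
  ring

theorem integral_eq_of_differentiableOn_halfStrip {E : Type*} [NormedAddCommGroup E]
    [NormedSpace ℂ E] {f : ℂ → E} {a b : ℝ} {g : ℝ → ℝ}
    (hf : ContinuousOn f ([[a, b]] ×ℂ Ici 0))
    (hf' : DifferentiableOn ℂ f (Ioo (min a b) (max a b) ×ℂ Ioi 0))
    (hg : IntegrableOn g (Ioi 0)) (hg0 : Tendsto g atTop (𝓝 0))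
    (hfg : ∀ z ∈ [[a, b]] ×ℂ Ici 0, ‖f z‖ ≤ g z.im) :
    ∫ t in a..b, f t = Complex.I • ((∫ τ in Ioi (0 : ℝ), f (a + τ * Complex.I)) -
        ∫ τ in Ioi (0 : ℝ), f (b + τ * Complex.I)) := by
  have side_integrable {c : ℝ} (hc : c ∈ [[a, b]]) :
      IntegrableOn (fun τ : ℝ => f (c + τ * Complex.I)) (Ioi 0) := by
    have maps : MapsTo (fun τ : ℝ => (c + τ * Complex.I : ℂ)) (Ioi 0) ([[a, b]] ×ℂ Ici 0) :=
      fun τ hτ => by simpa [Complex.mem_reProdIm] using ⟨hc, le_of_lt hτ⟩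
    refine hg.mono' ?_ ((ae_restrict_mem measurableSet_Ioi).mono fun τ hτ => ?_)
    · exact (hf.comp (by fun_prop) maps).aestronglyMeasurable measurableSet_Ioi
    · simpa using hfg _ (maps hτ)
  have top_tendsto :
      Tendsto (fun T : ℝ => ∫ t in a..b, f (t + T * Complex.I)) atTop (𝓝 0) := by
    refine squeeze_zero_norm' (a := fun T => g T * |b - a|) ?_ (by simpa using hg0.mul_const _)
    filter_upwards [eventually_ge_atTop 0] with T hT
    refine intervalIntegral.norm_integral_le_of_norm_le_const fun t ht => ?_
    simpa using hfg (t + T * Complex.I)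
      (by simpa [Complex.mem_reProdIm] using ⟨uIoc_subset_uIcc ht, hT⟩)
  have rectangle {T : ℝ} (hT : 0 ≤ T) :
      (∫ t in a..b, f t) = (∫ t in a..b, f (t + T * Complex.I)) +
        Complex.I • ((∫ τ in (0 : ℝ)..T, f (a + τ * Complex.I)) -
          ∫ τ in (0 : ℝ)..T, f (b + τ * Complex.I)) := by
    have boundary := Complex.integral_boundary_rect_eq_zero_of_continuousOn_of_differentiableOn f
      a (b + T * Complex.I)
      (hf.mono (by simpa [uIcc_of_le hT] using
        Complex.reProdIm_subset_iff.2 (prod_mono subset_rfl Icc_subset_Ici_self)))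
      (hf'.mono (by simpa [hT] using
        Complex.reProdIm_subset_iff.2 (prod_mono subset_rfl Ioo_subset_Ioi_self)))
    simp only [Complex.ofReal_im, Complex.ofReal_zero, zero_mul, add_zero, Complex.ofReal_re,
      Complex.add_re, Complex.mul_re, Complex.I_re, mul_zero, Complex.I_im, mul_one, sub_self,
      Complex.add_im, Complex.mul_im, zero_add] at boundary
    rw [smul_sub, ← sub_eq_zero, ← boundary]
    abel
  have side_tendsto {c : ℝ} (hc : c ∈ [[a, b]]) :=
    intervalIntegral_tendsto_integral_Ioi 0 (side_integrable hc) tendsto_id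
  have limit := top_tendsto.add
    (((side_tendsto left_mem_uIcc).sub (side_tendsto right_mem_uIcc)).const_smul Complex.I)
  rw [zero_add] at limit
  refine tendsto_nhds_unique (tendsto_const_nhds.congr' ?_) limit
  filter_upwards [eventually_ge_atTop 0] with T hT using rectangle hT

theorem complex_sqrt_sq (z : ℂ) : z.sqrt ^ 2 = z := by
  rw [Complex.sqrt, Complex.cpow_ofNat_inv_pow]

theorem norm_complex_sqrt (z : ℂ) : ‖z.sqrt‖ = √‖z‖ := by
  rw [← Real.sqrt_sq (norm_nonneg z.sqrt), ← norm_pow, complex_sqrt_sq]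

theorem complex_sqrt_ofReal {a : ℝ} (ha : 0 ≤ a) : (a : ℂ).sqrt = √a := by
  rw [Complex.sqrt_of_nonneg (Complex.zero_le_real.2 ha), Complex.ofReal_re]

theorem complex_sqrt_mul {z w : ℂ} (hz : z ≠ 0) (hw : w ≠ 0)
    (h : z.arg + w.arg ∈ Ioc (-π) π) : (z * w).sqrt = z.sqrt * w.sqrt := by
  rw [sqrt_eq_exp (mul_ne_zero hz hw), sqrt_eq_exp hz, sqrt_eq_exp hw, Complex.log_mul hz hw h,
    add_div, Complex.exp_add]

theorem complex_sqrt_neg_I : (-Complex.I).sqrt = Complex.exp (-(π / 4) * Complex.I) := by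
  rw [sqrt_eq_exp (neg_ne_zero.2 Complex.I_ne_zero), Complex.log_neg_I]
  ring_nf

theorem sqrt_re_le_re_complex_sqrt (z : ℂ) : √z.re ≤ z.sqrt.re := by
  rw [Complex.sqrt, Complex.cpow_inv_two_re]
  exact Real.sqrt_le_sqrt (by linarith [Complex.re_le_norm z])

theorem norm_complex_sqrt_add_sub_sqrt_le {a : ℝ} (ha : 0 < a) {z : ℂ} (hz : 0 ≤ z.re) :
    ‖(a + z).sqrt - √a‖ ≤ ‖z‖ / (2 * √a) := by
  have factorization : ((a + z).sqrt - √a) * ((a + z).sqrt + √a) = z := by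
    have sq_sqrt : (√a : ℂ) ^ 2 = a := mod_cast Real.sq_sqrt ha.le
    linear_combination complex_sqrt_sq (a + z) - sq_sqrt
  have lower_bound : 2 * √a ≤ ‖(a + z).sqrt + √a‖ :=
    calc 2 * √a ≤ ((a + z).sqrt + √a).re := by
          have : √a ≤ (a + z).sqrt.re :=
            (Real.sqrt_le_sqrt (by simpa)).trans (sqrt_re_le_re_complex_sqrt (a + z))
          rw [Complex.add_re, Complex.ofReal_re]
          linarith
      _ ≤ _ := Complex.re_le_norm _
  rw [le_div_iff₀ (by positivity)]
  calc _ ≤ ‖(a + z).sqrt - √a‖ * ‖(a + z).sqrt + √a‖ := by gcongr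
    _ = ‖z‖ := by rw [← norm_mul, factorization]

theorem integrableOn_rpow_sub_one_mul_exp_neg_mul {s x : ℝ} (hs : 0 < s) (hx : 0 < x) :
    IntegrableOn (fun t : ℝ => t ^ (s - 1) * Real.exp (-(x * t))) (Ioi 0) := by
  refine Integrable.of_integral_ne_zero ?_
  rw [Real.integral_rpow_mul_exp_neg_mul_Ioi hs hx]
  have := Real.Gamma_pos_of_pos hs
  positivity

theorem norm_laplace_integral_sub_le {E : Type*} [NormedAddCommGroup E] [NormedSpace ℝ E]
    [CompleteSpace E] {φ : ℝ → E} {c : E} {K s x : ℝ} (hs : 0 < s) (hx : 0 < x)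
    (hφ : AEStronglyMeasurable φ (volume.restrict (Ioi 0)))
    (hφc : ∀ t > 0, ‖φ t - c‖ ≤ K * t) :
    ‖(∫ t in Ioi (0 : ℝ), (t ^ (s - 1) * Real.exp (-(x * t))) • φ t) -
        ((1 / x) ^ s * Real.Gamma s) • c‖ ≤ K * ((1 / x) ^ (s + 1) * Real.Gamma (s + 1)) := by
  set w : ℝ → ℝ := fun t => t ^ (s - 1) * Real.exp (-(x * t))
  have w_integrable : IntegrableOn w (Ioi 0) := integrableOn_rpow_sub_one_mul_exp_neg_mul hs hx
  have majorant_integrable :=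
    (integrableOn_rpow_sub_one_mul_exp_neg_mul (by linarith : 0 < s + 1) hx).const_mul K
  have majorant : ∀ᵐ t ∂volume.restrict (Ioi (0 : ℝ)),
      ‖w t • (φ t - c)‖ ≤ K * (t ^ (s + 1 - 1) * Real.exp (-(x * t))) := by
    filter_upwards [ae_restrict_mem measurableSet_Ioi] with t (ht : 0 < t)
    calc ‖w t • (φ t - c)‖ = w t * ‖φ t - c‖ := by
          rw [norm_smul, Real.norm_of_nonneg (by positivity)]
      _ ≤ w t * (K * t) := by gcongr; exact hφc t ht
      _ = K * (t ^ (s + 1 - 1) * Real.exp (-(x * t))) := by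
          rw [show s + 1 - 1 = s - 1 + 1 by ring, Real.rpow_add_one ht.ne']
          ring
  have error_integrable : IntegrableOn (fun t => w t • (φ t - c)) (Ioi 0) :=
    majorant_integrable.mono' (w_integrable.aestronglyMeasurable.smul
      (hφ.sub aestronglyMeasurable_const)) majorant
  have split : (∫ t in Ioi (0 : ℝ), w t • φ t) - ((1 / x) ^ s * Real.Gamma s) • c =
      ∫ t in Ioi (0 : ℝ), w t • (φ t - c) := by
    rw [← Real.integral_rpow_mul_exp_neg_mul_Ioi hs hx, ← integral_smul_const, sub_eq_iff_eq_add,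
      ← integral_add error_integrable (w_integrable.smul_const c)]
    simp only [smul_sub, sub_add_cancel]
  rw [split, ← Real.integral_rpow_mul_exp_neg_mul_Ioi (by linarith) hx, ← integral_const_mul]
  exact norm_integral_le_of_norm_le majorant_integrable majorant

theorem norm_laplace_sqrt_integral_sub_le {E : Type*} [NormedAddCommGroup E] [NormedSpace ℝ E]
    [CompleteSpace E] {φ : ℝ → E} {c : E} {K x : ℝ} (hx : 0 < x)
    (hφ : AEStronglyMeasurable φ (volume.restrict (Ioi 0)))
    (hφc : ∀ t > 0, ‖φ t - c‖ ≤ K * t) :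
    ‖(∫ t in Ioi (0 : ℝ), (√t * Real.exp (-(x * t))) • φ t) -
        (x ^ (-(3 : ℝ) / 2) * (√π / 2)) • c‖ ≤ K * (x ^ (-(5 : ℝ) / 2) * (3 * √π / 4)) := by
  have weight (t : ℝ) : t ^ ((3 : ℝ) / 2 - 1) = √t := by
    rw [Real.sqrt_eq_rpow]
    norm_num
  have gamma_three_halves : Real.Gamma (3 / 2) = √π / 2 := by
    rw [show (3 : ℝ) / 2 = 1 / 2 + 1 by norm_num, Real.Gamma_add_one (by norm_num),
      Real.Gamma_one_half_eq]
    ring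
  have gamma_five_halves : Real.Gamma (3 / 2 + 1) = 3 * √π / 4 := by
    rw [Real.Gamma_add_one (by norm_num), gamma_three_halves]
    ring
  have inv_rpow (r : ℝ) : (1 / x) ^ r = x ^ (-r) := by
    rw [one_div, Real.inv_rpow hx.le, Real.rpow_neg hx.le]
  have watson := norm_laplace_integral_sub_le (s := 3 / 2) (by norm_num) hx hφ hφc
  simp only [weight, inv_rpow, gamma_three_halves, gamma_five_halves] at watson
  convert watson using 4 <;> norm_num

/-- The integrand `√(1 - z²) e^{ixz}` of Poisson's integral for the Bessel functions, extended to
complex `z`; the principal branch of the square root is analytic on the half-strip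
`0 < re z < 1`, `0 < im z`. -/
noncomputable def poissonIntegrand (x : ℝ) (z : ℂ) : ℂ :=
  (1 - z ^ 2).sqrt * Complex.exp (Complex.I * x * z)

theorem re_one_sub_sq (z : ℂ) : (1 - z ^ 2).re = 1 - z.re ^ 2 + z.im ^ 2 := by
  rw [Complex.sub_re, Complex.one_re, pow_two, Complex.mul_re]
  ring

theorem continuousOn_poissonIntegrand (x : ℝ) :
    ContinuousOn (poissonIntegrand x) (Icc 0 1 ×ℂ Ici 0) := by
  refine ContinuousOn.mul (fun z hz => ?_) (by fun_prop)
  have re_nonneg : 0 ≤ (1 - z ^ 2).re := by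
    rw [re_one_sub_sq]
    nlinarith [hz.1.1, hz.1.2]
  exact ((Complex.continuousAt_sqrt (.inl re_nonneg)).comp
    (f := fun z : ℂ => 1 - z ^ 2) (by fun_prop)).continuousWithinAt

theorem differentiableOn_poissonIntegrand (x : ℝ) :
    DifferentiableOn ℂ (poissonIntegrand x) (Ioo 0 1 ×ℂ Ioi 0) := by
  refine DifferentiableOn.mul (fun z hz => ?_) (by fun_prop)
  have re_pos : 0 < (1 - z ^ 2).re := by
    rw [re_one_sub_sq]
    nlinarith [hz.1.1, hz.1.2]
  exact ((Complex.differentiableAt_sqrt (.inl re_pos)).comp z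
    (f := fun z : ℂ => 1 - z ^ 2) (by fun_prop)).differentiableWithinAt

theorem norm_poissonIntegrand_le {x : ℝ} (hx : 0 < x) {z : ℂ} (hz : z ∈ Icc 0 1 ×ℂ Ici 0) :
    ‖poissonIntegrand x z‖ ≤ (2 + 2 / x) * Real.exp (-(x / 2) * z.im) := by
  have norm_le : ‖z‖ ≤ 1 + z.im := by
    have := Complex.norm_le_abs_re_add_abs_im z
    rw [abs_of_nonneg hz.1.1, abs_of_nonneg hz.2] at this
    linarith [hz.1.2]
  have sqrt_le : ‖(1 - z ^ 2).sqrt‖ ≤ 2 + z.im := by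
    have : 0 ≤ z.im := hz.2
    rw [norm_complex_sqrt, Real.sqrt_le_iff]
    refine ⟨by positivity, (norm_sub_le _ _).trans ?_⟩
    rw [norm_one, norm_pow]
    nlinarith [norm_nonneg z]
  have linear_le : 2 + z.im ≤ (2 + 2 / x) * Real.exp (x / 2 * z.im) := by
    have : 0 ≤ z.im := hz.2
    calc 2 + z.im ≤ (2 + 2 / x) * (x / 2 * z.im + 1) := by
          field_simp
          nlinarith [mul_nonneg hx.le this, mul_nonneg (mul_nonneg hx.le hx.le) this]
      _ ≤ _ := by gcongr; exact Real.add_one_le_exp _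
  have norm_exp : ‖Complex.exp (Complex.I * x * z)‖ = Real.exp (-(x * z.im)) := by
    simp [Complex.norm_exp, Complex.mul_re]
  calc ‖poissonIntegrand x z‖ ≤ (2 + z.im) * Real.exp (-(x * z.im)) := by
        rw [poissonIntegrand, norm_mul, norm_exp]
        gcongr
    _ ≤ (2 + 2 / x) * Real.exp (x / 2 * z.im) * Real.exp (-(x * z.im)) := by gcongr
    _ = (2 + 2 / x) * Real.exp (-(x / 2) * z.im) := by
        rw [mul_assoc, ← Real.exp_add]
        ring_nf

theorem poissonIntegrand_ofReal (x : ℝ) {t : ℝ} (ht : t ∈ Icc 0 1) :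
    poissonIntegrand x t = √(1 - t ^ 2) * Complex.exp ((x * t : ℝ) * Complex.I) := by
  have nonneg : 0 ≤ 1 - t ^ 2 := by nlinarith [ht.1, ht.2]
  have sqrt_eq : (1 - (t : ℂ) ^ 2).sqrt = ↑√(1 - t ^ 2) := by
    rw [← complex_sqrt_ofReal nonneg]
    push_cast
    rfl
  rw [poissonIntegrand, sqrt_eq]
  push_cast
  ring_nf

theorem poissonIntegrand_ofReal_mul_I (x τ : ℝ) :
    poissonIntegrand x (τ * Complex.I) = (√(1 + τ ^ 2) * Real.exp (-(x * τ)) : ℝ) := by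
  have sqrt_eq : (1 - ((τ : ℂ) * Complex.I) ^ 2).sqrt = ↑√(1 + τ ^ 2) := by
    rw [← complex_sqrt_ofReal (by positivity), mul_pow, Complex.I_sq]
    push_cast
    ring_nf
  have exponent : Complex.I * x * (τ * Complex.I) = (-(x * τ) : ℝ) := by
    push_cast
    linear_combination (x * τ : ℂ) * Complex.I_sq
  rw [poissonIntegrand, sqrt_eq, exponent]
  push_cast
  rfl

theorem poissonIntegrand_one_add_mul_I (x : ℝ) {τ : ℝ} (hτ : 0 < τ) :
    poissonIntegrand x (1 + τ * Complex.I) = Complex.exp ((x - π / 4 : ℝ) * Complex.I) *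
      ((√τ * Real.exp (-(x * τ))) • (2 + τ * Complex.I).sqrt) := by
  have factorization : 1 - (1 + τ * Complex.I) ^ 2 = τ * (-Complex.I * (2 + τ * Complex.I)) := by
    ring
  have re_eq : (2 + τ * Complex.I).re = 2 := by simp
  have ne_zero : 2 + τ * Complex.I ≠ 0 := fun h => by simp [h] at re_eq
  have arg_bounds := abs_lt.1
    (Complex.abs_arg_lt_pi_div_two_iff.2 (.inl (re_eq ▸ two_pos : 0 < (2 + τ * Complex.I).re)))
  have sqrt_eq : (1 - (1 + (τ : ℂ) * Complex.I) ^ 2).sqrt =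
      √τ * (Complex.exp (-(π / 4) * Complex.I) * (2 + τ * Complex.I).sqrt) := by
    rw [factorization, complex_sqrt_mul (mod_cast hτ.ne') (by simp [ne_zero]) ?_,
      complex_sqrt_mul (by simp) ne_zero ?_, complex_sqrt_ofReal hτ.le, complex_sqrt_neg_I]
    · rw [Complex.arg_neg_I]
      constructor <;> linarith [arg_bounds.1, arg_bounds.2, Real.pi_pos]
    · rw [Complex.arg_ofReal_of_nonneg hτ.le, zero_add]
      exact Complex.arg_mem_Ioc _
  have exponent : Complex.I * x * (1 + τ * Complex.I) = x * Complex.I + (-(x * τ) : ℝ) := by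
    push_cast
    linear_combination (x * τ : ℂ) * Complex.I_sq
  have phase : ((x - π / 4 : ℝ) : ℂ) * Complex.I = x * Complex.I + -(π / 4) * Complex.I := by
    push_cast
    ring
  rw [poissonIntegrand, sqrt_eq, exponent, phase, Complex.exp_add, Complex.exp_add,
    Complex.real_smul]
  push_cast
  ring

theorem re_integral_poissonIntegrand (x : ℝ) :
    (∫ t in (0 : ℝ)..1, poissonIntegrand x t).re =
      ∫ t in (0 : ℝ)..1, √(1 - t ^ 2) * Real.cos (x * t) := by
  have unit_interval : [[(0 : ℝ), 1]] = Icc 0 1 := uIcc_of_le zero_le_one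
  have integrable : IntervalIntegrable (fun t : ℝ => poissonIntegrand x t) volume 0 1 := by
    refine ContinuousOn.intervalIntegrable
      ((continuousOn_poissonIntegrand x).comp (by fun_prop) fun t ht => ?_)
    rw [unit_interval] at ht
    simpa [Complex.mem_reProdIm] using ht
  refine (Complex.reCLM.intervalIntegral_comp_comm integrable).symm.trans ?_
  refine intervalIntegral.integral_congr fun t ht => ?_
  simp only [Complex.reCLM_apply, poissonIntegrand_ofReal x (unit_interval ▸ ht),
    Complex.re_ofReal_mul, Complex.exp_ofReal_mul_I_re]

theorem integral_sqrt_mul_cos_eq_im {x : ℝ} (hx : 0 < x) :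
    ∫ t in (0 : ℝ)..1, √(1 - t ^ 2) * Real.cos (x * t) =
      (∫ τ in Ioi (0 : ℝ), poissonIntegrand x (1 + τ * Complex.I)).im := by
  have unit_interval : [[(0 : ℝ), 1]] = Icc 0 1 := uIcc_of_le zero_le_one
  have bound_tendsto : Tendsto (fun τ => (2 + 2 / x) * Real.exp (-(x / 2) * τ)) atTop (𝓝 0) := by
    simpa using (Real.tendsto_exp_atBot.comp
      (tendsto_id.const_mul_atTop_of_neg (neg_lt_zero.2 (half_pos hx)))).const_mul (2 + 2 / x)
  have contour := integral_eq_of_differentiableOn_halfStrip (a := 0) (b := 1)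
    (unit_interval ▸ continuousOn_poissonIntegrand x)
    (by simpa using differentiableOn_poissonIntegrand x)
    ((exp_neg_integrableOn_Ioi 0 (half_pos hx)).const_mul (2 + 2 / x)) bound_tendsto
    (fun z hz => norm_poissonIntegrand_le hx (unit_interval ▸ hz))
  have im_left_ray : (∫ τ in Ioi (0 : ℝ), poissonIntegrand x (τ * Complex.I)).im = 0 := by
    simp only [poissonIntegrand_ofReal_mul_I, integral_complex_ofReal, Complex.ofReal_im]
  rw [← re_integral_poissonIntegrand, contour]
  simp [im_left_ray]

theorem deriv_J0_eq_im_integral {x : ℝ} (hx : 0 < x) :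
    deriv J0 x = -(2 * x / π) * (Complex.exp ((x - π / 4 : ℝ) * Complex.I) *
      ∫ τ in Ioi (0 : ℝ), (√τ * Real.exp (-(x * τ))) • (2 + τ * Complex.I).sqrt).im := by
  rw [deriv_J0_eq_integral_cos_mul_sqrt, integral_sqrt_mul_cos_eq_im hx,
    setIntegral_congr_fun measurableSet_Ioi
      fun τ (hτ : 0 < τ) => poissonIntegrand_one_add_mul_I x hτ,
    integral_const_mul]

theorem norm_integral_sqrt_two_add_mul_I_sub_le {x : ℝ} (hx : 0 < x) :
    ‖(∫ τ in Ioi (0 : ℝ), (√τ * Real.exp (-(x * τ))) • (2 + τ * Complex.I).sqrt) -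
        (√(π / 2) * x ^ (-(3 : ℝ) / 2) : ℝ)‖ ≤
      3 / 8 * √(π / 2) * x ^ (-(5 : ℝ) / 2) := by
  have measurable : AEStronglyMeasurable (fun τ : ℝ => (2 + τ * Complex.I).sqrt)
      (volume.restrict (Ioi 0)) := by
    refine (continuous_iff_continuousAt.2 fun τ => ?_).aestronglyMeasurable
    exact (Complex.continuousAt_sqrt (.inl (by simp))).comp
      (f := fun τ : ℝ => 2 + τ * Complex.I) (by fun_prop)
  have sqrt_near_sqrt_two {τ : ℝ} (hτ : 0 < τ) :
      ‖(2 + τ * Complex.I).sqrt - √2‖ ≤ 1 / (2 * √2) * τ := by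
    have := norm_complex_sqrt_add_sub_sqrt_le (z := τ * Complex.I) two_pos (by simp)
    simpa [abs_of_pos hτ, div_eq_inv_mul] using this
  have sqrt_pi_div_two : √(π / 2) = √π / √2 := Real.sqrt_div' _ zero_le_two
  have leading : (x ^ (-(3 : ℝ) / 2) * (√π / 2)) • (√2 : ℂ) =
      (√(π / 2) * x ^ (-(3 : ℝ) / 2) : ℝ) := by
    rw [Complex.real_smul, ← Complex.ofReal_mul, sqrt_pi_div_two]
    congr 1
    field_simp
    rw [Real.sq_sqrt zero_le_two]
  rw [← leading]
  refine (norm_laplace_sqrt_integral_sub_le hx measurable fun τ => sqrt_near_sqrt_two).trans_eq ?_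
  rw [sqrt_pi_div_two]
  ring

theorem two_div_pi_mul_sqrt_pi_div_two : 2 / π * √(π / 2) = √(2 / π) := by
  rw [← inv_div π 2, Real.sqrt_inv, inv_mul_eq_div, Real.sqrt_div_self]

theorem J0_deriv_asymptotics_general {x : ℝ} (hx : 0 < x) :
    |deriv J0 x + √(2 / π) * Real.sin (x - π / 4) / √x| ≤
      3 / 8 * √(2 / π) * x ^ (-(3 : ℝ) / 2) := by
  set phase : ℂ := Complex.exp ((x - π / 4 : ℝ) * Complex.I)
  set L : ℂ := ∫ τ in Ioi (0 : ℝ), (√τ * Real.exp (-(x * τ))) • (2 + τ * Complex.I).sqrt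
  set main : ℝ := √(π / 2) * x ^ (-(3 : ℝ) / 2)
  have main_term : √(2 / π) * Real.sin (x - π / 4) / √x = 2 * x / π * (phase * main).im := by
    have main_eq : main = √(π / 2) * ((√x)⁻¹ / x) := by
      rw [Real.sqrt_eq_rpow x, ← Real.rpow_neg hx.le, ← Real.rpow_sub_one hx.ne']
      norm_num [main]
    rw [Complex.im_mul_ofReal, Complex.exp_ofReal_mul_I_im, main_eq,
      ← two_div_pi_mul_sqrt_pi_div_two]
    field_simp
  have error : deriv J0 x + √(2 / π) * Real.sin (x - π / 4) / √x =
      -(2 * x / π) * (phase * (L - main)).im := by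
    rw [deriv_J0_eq_im_integral hx, main_term, mul_sub, Complex.sub_im]
    ring
  rw [error, abs_mul, abs_neg, abs_of_pos (by positivity)]
  calc
    _ ≤ 2 * x / π * ‖phase * (L - main)‖ := by gcongr; exact Complex.abs_im_le_norm _
    _ = 2 * x / π * ‖L - main‖ := by rw [norm_mul, Complex.norm_exp_ofReal_mul_I, one_mul]
    _ ≤ 2 * x / π * (3 / 8 * √(π / 2) * x ^ (-(5 : ℝ) / 2)) := by
        gcongr
        exact norm_integral_sqrt_two_add_mul_I_sub_le hx
    _ = 3 / 8 * √(2 / π) * x ^ (-(3 : ℝ) / 2) := by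
        rw [← two_div_pi_mul_sqrt_pi_div_two, show -(3 : ℝ) / 2 = -5 / 2 + 1 by norm_num,
          Real.rpow_add_one hx.ne']
        ring

/-- Asymptotics of `J₀′`: there is `C > 0` such that for all `x ≥ 1`,
`|J₀′(x) + √(2/π) sin(x − π/4)/√x| ≤ C x^{−3/2}`. -/
theorem J0_deriv_asymptotics :
    ∃ C : ℝ, 0 < C ∧ ∀ x : ℝ, 1 ≤ x →
      |deriv J0 x + Real.sqrt (2 / Real.pi) * Real.sin (x - Real.pi / 4) / Real.sqrt x| ≤
        C * x ^ (-(3 : ℝ) / 2) :=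
  ⟨3 / 8 * √(2 / π), by positivity, fun _ hx => J0_deriv_asymptotics_general (by linarith)⟩
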